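/- Let 1 ≤ k ≤ n/163000. Then ‖P'‖_{[-1,1]} ≥ (1/202)·((n-k)/(8k))^{1/2}·‖P‖_{[-1,1]} for every P ∈ 𝓕_{n,k}^c. -/

import Mathlib

open Polynomial Set
open scoped Classical

/-!
Let `|P|` attain its maximum `M` over `[-1, 1]` at `x₀`, and suppose that `D = ‖P'‖` is so small
that `4 l D < M`. On a segment `[c - l, c + l] ⊆ [-1, 1]` containing `x₀` we then have
`|P| ≥ M / 2`, so the logarithmic derivative `P' / P = ∑ 1 / (x - z)`, summed over the roots `z`,
is at most `2 D / M` in modulus there.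

Write `x = c + l J(ζ)` with the Joukowski map `J(ζ) = (ζ + ζ⁻¹) / 2` and `|ζ| = 1`. By Cauchy's
formula, averaging `l / (x - z)` over the circle against the weight `(ζ² - 1) (ζ + 2i) / 2` gives
`u (u + 2i)`, where `z = c + l J(u)` and `|u| < 1`. The real part of `u (u + 2i)` is at least `-3`
for every root, and at least `|u|² ≥ (l / 4)²` for roots in the upper half-disk, since these have
`Im u ≤ 0`. As the weight is bounded by `3`, the number `N` of roots in the half-disk and the
number `B` of other roots satisfy `N (l / 4)² - 3 B ≤ 6 l D / M < 3 / 2`. For `N ≥ n - k` and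
`B ≤ k` this fails when `l² = 81 k / (n - k)`, so `M ≤ 4 l D` for this `l`.
-/

open Real (circleAverage)

section CircleAverage

theorem norm_circleAverage_le_of_norm_le {E : Type*} [NormedAddCommGroup E] [NormedSpace ℝ E]
    {f : ℂ → E} {c : ℂ} {R C : ℝ} (hf : ∀ z ∈ Metric.sphere c |R|, ‖f z‖ ≤ C) :
    ‖circleAverage f c R‖ ≤ C := by
  have hint : ‖∫ θ in 0..2 * Real.pi, f (circleMap c R θ)‖ ≤ C * |2 * Real.pi - 0| :=
    intervalIntegral.norm_integral_le_of_norm_le_const fun θ _ ↦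
      hf _ (circleMap_mem_sphere' c R θ)
  rw [sub_zero, abs_of_pos Real.two_pi_pos] at hint
  rwa [Real.circleAverage_def, norm_smul, norm_inv, Real.norm_of_nonneg Real.two_pi_pos.le,
    inv_mul_le_iff₀ Real.two_pi_pos, mul_comm _ C]

variable {ι E : Type*} [NormedAddCommGroup E] {f : ι → ℂ → E} {c : ℂ} {R : ℝ} {s : Multiset ι}

theorem circleIntegrable_multiset_sum (hf : ∀ i ∈ s, CircleIntegrable (f i) c R) :
    CircleIntegrable (fun z ↦ (s.map fun i ↦ f i z).sum) c R := by
  induction s using Multiset.induction_on with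
  | empty => simp
  | cons i s ih =>
    rw [Multiset.forall_mem_cons] at hf
    simp only [Multiset.map_cons, Multiset.sum_cons]
    exact hf.1.add (ih hf.2)

theorem circleAverage_multiset_sum [NormedSpace ℝ E] (hf : ∀ i ∈ s, CircleIntegrable (f i) c R) :
    circleAverage (fun z ↦ (s.map fun i ↦ f i z).sum) c R =
      (s.map fun i ↦ circleAverage (f i) c R).sum := by
  induction s using Multiset.induction_on with
  | empty => simp [Real.circleAverage_def]
  | cons i s ih =>
    rw [Multiset.forall_mem_cons] at hf
    simp only [Multiset.map_cons, Multiset.sum_cons]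
    rw [Real.circleAverage_fun_add hf.1 (circleIntegrable_multiset_sum hf.2), ih hf.2]

end CircleAverage

theorem countP_mul_add_countP_not_mul_le_sum_map {α : Type*} {s : Multiset α} {p : α → Prop}
    [DecidablePred p] {f : α → ℝ} {a b : ℝ} (ha : ∀ x ∈ s, p x → a ≤ f x)
    (hb : ∀ x ∈ s, b ≤ f x) :
    s.countP p * a + s.countP (fun x ↦ ¬ p x) * b ≤ (s.map f).sum := by
  induction s using Multiset.induction_on with
  | empty => simp
  | cons x s ih =>
    rw [Multiset.forall_mem_cons] at ha hb
    have hs := ih ha.2 hb.2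
    rw [Multiset.map_cons, Multiset.sum_cons, Multiset.countP_cons, Multiset.countP_cons]
    by_cases hx : p x
    · simp only [hx, if_true, not_true, if_false]
      push_cast
      linarith [ha.1 hx]
    · simp only [hx, if_true, not_false_iff, if_false]
      push_cast
      linarith [hb.1]

/-- The Joukowski map, which sends the unit circle onto `[-1, 1]` and the punctured open unit disk
bijectively onto the complement of `[-1, 1]`. Its value at `0` is the junk value `0`. -/
noncomputable def joukowski (ζ : ℂ) : ℂ := (ζ + ζ⁻¹) / 2

section Joukowski

variable {ζ u w : ℂ}

theorem joukowski_of_norm_eq_one (hζ : ‖ζ‖ = 1) : joukowski ζ = ζ.re := by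
  rw [joukowski, Complex.inv_eq_conj hζ, Complex.add_conj]
  push_cast
  ring

theorem exists_joukowski_eq (hw : ∀ t ∈ Icc (-1 : ℝ) 1, w ≠ t) :
    ∃ u : ℂ, u ≠ 0 ∧ ‖u‖ < 1 ∧ joukowski u = w := by
  obtain ⟨s, hs⟩ := IsAlgClosed.exists_pow_nat_eq (w ^ 2 - 1) two_pos
  obtain ⟨u, v, huv, hadd, hu⟩ : ∃ u v : ℂ, u * v = 1 ∧ u + v = 2 * w ∧ ‖u‖ ≤ 1 := by
    have hmul : (w + s) * (w - s) = 1 := by linear_combination -hs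
    rcases le_total ‖w + s‖ 1 with h | h
    · exact ⟨w + s, w - s, hmul, by ring, h⟩
    · refine ⟨w - s, w + s, by rw [mul_comm, hmul], by ring, ?_⟩
      rw [eq_inv_of_mul_eq_one_right hmul, norm_inv]
      exact inv_le_one_of_one_le₀ h
  have huw : joukowski u = w := by
    rw [joukowski, ← eq_inv_of_mul_eq_one_right huv, hadd]
    ring
  refine ⟨u, left_ne_zero_of_mul_eq_one huv, hu.lt_of_ne fun hu1 ↦ ?_, huw⟩
  exact hw u.re (abs_le.mp ((Complex.abs_re_le_norm u).trans hu))
    (by rw [← huw, joukowski_of_norm_eq_one hu1])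

theorem joukowski_im (u : ℂ) : (joukowski u).im = u.im * (1 - (‖u‖ ^ 2)⁻¹) / 2 := by
  rw [joukowski, Complex.div_ofNat_im, Complex.add_im, Complex.inv_im, Complex.normSq_eq_norm_sq]
  ring

theorem im_nonpos_of_joukowski_im_nonneg (hu0 : u ≠ 0) (hu1 : ‖u‖ < 1)
    (h : 0 ≤ (joukowski u).im) : u.im ≤ 0 := by
  have hinv : 1 < (‖u‖ ^ 2)⁻¹ :=
    (one_lt_inv₀ (by positivity)).mpr (pow_lt_one₀ (norm_nonneg u) hu1 two_ne_zero)
  rw [joukowski_im] at h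
  nlinarith

theorem one_le_norm_mul_norm_joukowski (hu0 : u ≠ 0) (hu1 : ‖u‖ ≤ 1) :
    1 ≤ ‖u‖ * (2 * ‖joukowski u‖ + 1) := by
  have hinv : ‖u‖⁻¹ ≤ 2 * ‖joukowski u‖ + 1 := by
    calc ‖u‖⁻¹ = ‖2 * joukowski u - u‖ := by rw [← norm_inv, joukowski]; congr 1; ring
      _ ≤ ‖2 * joukowski u‖ + ‖u‖ := norm_sub_le _ _
      _ ≤ 2 * ‖joukowski u‖ + 1 := by rw [norm_mul, Complex.norm_ofNat]; gcongr
  rwa [← inv_le_iff_one_le_mul₀' (norm_pos_iff.mpr hu0)]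

theorem joukowski_sub_joukowski (hζ : ζ ≠ 0) (hu : u ≠ 0) :
    joukowski ζ - joukowski u = -((ζ - u) * (1 - u * ζ)) / (2 * ζ * u) := by
  unfold joukowski
  field_simp
  ring

theorem one_sub_mul_ne_zero_of_norm_lt_one (hu : ‖u‖ < 1) (hζ : ‖ζ‖ ≤ 1) : 1 - u * ζ ≠ 0 := by
  refine sub_ne_zero.mpr fun h ↦ ?_
  have : ‖u * ζ‖ < 1 := by
    rw [norm_mul]
    exact mul_lt_one_of_nonneg_of_lt_one_left (norm_nonneg u) hu hζ
  rw [← h, norm_one] at this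
  exact this.false

theorem joukowski_ne_joukowski (hu0 : u ≠ 0) (hu1 : ‖u‖ < 1) (hζ : ‖ζ‖ = 1) :
    joukowski ζ ≠ joukowski u := by
  have hζ0 : ζ ≠ 0 := norm_ne_zero_iff.mp (by rw [hζ]; exact one_ne_zero)
  have hsub : ζ - u ≠ 0 := sub_ne_zero.mpr fun h ↦ by rw [h] at hζ; exact hu1.ne hζ
  rw [← sub_ne_zero, joukowski_sub_joukowski hζ0 hu0]
  exact div_ne_zero
    (neg_ne_zero.mpr (mul_ne_zero hsub (one_sub_mul_ne_zero_of_norm_lt_one hu1 hζ.le)))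
    (mul_ne_zero (mul_ne_zero two_ne_zero hζ0) hu0)

end Joukowski

section WeightedAverage

variable {h : ℂ → ℂ} {u : ℂ}

theorem circleIntegrable_div_joukowski_sub (hh : ContinuousOn h (Metric.sphere 0 1)) (hu0 : u ≠ 0)
    (hu1 : ‖u‖ < 1) :
    CircleIntegrable (fun ζ ↦ (ζ ^ 2 - 1) / 2 * h ζ * (1 / (joukowski ζ - joukowski u))) 0 1 := by
  have hJ : ContinuousOn joukowski (Metric.sphere 0 1) := by
    have hinv : ContinuousOn (fun ζ : ℂ ↦ ζ⁻¹) (Metric.sphere 0 1) :=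
      continuousOn_id.inv₀ fun ζ hζ ↦ Metric.ne_of_mem_sphere hζ one_ne_zero
    exact (continuousOn_id.add hinv).div_const 2
  refine ContinuousOn.circleIntegrable zero_le_one (.mul (by fun_prop) ?_)
  exact continuousOn_const.div (hJ.sub continuousOn_const) fun ζ hζ ↦
    sub_ne_zero.mpr (joukowski_ne_joukowski hu0 hu1 (mem_sphere_zero_iff_norm.mp hζ))

/- The factor `ζ ^ 2 - 1` cancels the denominator `1 - u * ζ` at the pole `ζ = u`. -/
theorem circleAverage_div_joukowski_sub (hh : DiffContOnCl ℂ h (Metric.ball 0 1)) (hu0 : u ≠ 0)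
    (hu1 : ‖u‖ < 1) :
    circleAverage (fun ζ ↦ (ζ ^ 2 - 1) / 2 * h ζ * (1 / (joukowski ζ - joukowski u))) 0 1 =
      u * h u := by
  have hden {ζ : ℂ} (hζ : ‖ζ‖ ≤ 1) : 1 - u * ζ ≠ 0 := one_sub_mul_ne_zero_of_norm_lt_one hu1 hζ
  set q : ℂ → ℂ := fun ζ ↦ u * (1 - ζ ^ 2) / (1 - u * ζ) with hq
  have hqd : DifferentiableOn ℂ q (Metric.closedBall 0 1) :=
    .div (by fun_prop) (by fun_prop) fun ζ hζ ↦ hden (mem_closedBall_zero_iff.mp hζ)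
  have hcauchy : circleAverage (fun ζ ↦ ((ζ - 0) / (ζ - u)) • (q ζ • h ζ)) 0 1 = q u • h u := by
    have hqh := (hqd.diffContOnCl_ball subset_rfl).smul hh
    rw [← abs_one] at hqh
    exact hqh.circleAverage_smul_div (by simpa using hu1)
  have hqu : q u = u := by
    simp only [hq, ← sq]
    exact mul_div_cancel_right₀ u (sq u ▸ hden hu1.le)
  rw [hqu, smul_eq_mul] at hcauchy
  rw [← hcauchy]
  refine Real.circleAverage_congr_sphere fun ζ hζ ↦ ?_
  have hζ1 : ‖ζ‖ = 1 := by simpa using hζ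
  have hζ0 : ζ ≠ 0 := norm_ne_zero_iff.mp (by rw [hζ1]; exact one_ne_zero)
  have hsub : ζ - u ≠ 0 := sub_ne_zero.mpr fun h ↦ by rw [h] at hζ1; exact hu1.ne hζ1
  have := hden hζ1.le
  simp only [joukowski_sub_joukowski hζ0 hu0, hq, smul_eq_mul]
  field_simp
  ring

theorem circleAverage_logDeriv_joukowski (hh : DiffContOnCl ℂ h (Metric.ball 0 1)) {P : ℂ[X]}
    {c l : ℂ} (hl : l ≠ 0) {u : ℂ → ℂ}
    (hu : ∀ z ∈ P.roots, u z ≠ 0 ∧ ‖u z‖ < 1 ∧ c + l * joukowski (u z) = z) :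
    circleAverage (fun ζ ↦ (ζ ^ 2 - 1) / 2 * h ζ * (l *
      (P.derivative.eval (c + l * joukowski ζ) / P.eval (c + l * joukowski ζ)))) 0 1 =
      (P.roots.map fun z ↦ u z * h (u z)).sum := by
  rcases eq_or_ne P 0 with rfl | hP
  · simp [Real.circleAverage_def]
  have hpartial {ζ : ℂ} (hζ : ‖ζ‖ = 1) :
      l * (P.derivative.eval (c + l * joukowski ζ) / P.eval (c + l * joukowski ζ)) =
        (P.roots.map fun z ↦ 1 / (joukowski ζ - joukowski (u z))).sum := by
    have hne : P.eval (c + l * joukowski ζ) ≠ 0 := fun h0 ↦ by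
      obtain ⟨hu0, hu1, hz⟩ := hu _ ((mem_roots hP).mpr h0)
      exact joukowski_ne_joukowski hu0 hu1 hζ (mul_left_cancel₀ hl (add_left_cancel hz)).symm
    rw [(IsAlgClosed.splits P).eval_derivative_div_eval_of_ne_zero hne,
      ← Multiset.sum_map_mul_left]
    refine congrArg Multiset.sum (Multiset.map_congr rfl fun z hz ↦ ?_)
    nth_rw 1 [← (hu z hz).2.2]
    rw [add_sub_add_left_eq_sub, ← mul_sub, mul_one_div, div_mul_cancel_left₀ hl, one_div]
  calc _ = circleAverage (fun ζ ↦ (P.roots.map fun z ↦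
        (ζ ^ 2 - 1) / 2 * h ζ * (1 / (joukowski ζ - joukowski (u z)))).sum) 0 1 := by
        refine Real.circleAverage_congr_sphere fun ζ hζ ↦ ?_
        simp only [hpartial (by simpa using hζ), Multiset.sum_map_mul_left]
    _ = (P.roots.map fun z ↦ circleAverage (fun ζ ↦
        (ζ ^ 2 - 1) / 2 * h ζ * (1 / (joukowski ζ - joukowski (u z)))) 0 1).sum :=
        circleAverage_multiset_sum fun z hz ↦ circleIntegrable_div_joukowski_sub
          (hh.continuousOn_ball.mono Metric.sphere_subset_closedBall) (hu z hz).1 (hu z hz).2.1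
    _ = _ := congrArg Multiset.sum (Multiset.map_congr rfl fun z hz ↦
        circleAverage_div_joukowski_sub hh (hu z hz).1 (hu z hz).2.1)

end WeightedAverage

section RootCount

theorem neg_three_le_re_mul_add_two_I {u : ℂ} (hu : ‖u‖ ≤ 1) :
    -3 ≤ (u * (u + 2 * Complex.I)).re := by
  have hnorm : ‖u * (u + 2 * Complex.I)‖ ≤ 1 * (1 + 2) := by
    rw [norm_mul]
    gcongr
    exact (norm_add_le _ _).trans (by simpa using hu)
  linarith [neg_le_of_abs_le ((Complex.abs_re_le_norm _).trans hnorm)]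

theorem sq_norm_le_re_mul_add_two_I {u : ℂ} (hu : ‖u‖ ≤ 1) (him : u.im ≤ 0) :
    ‖u‖ ^ 2 ≤ (u * (u + 2 * Complex.I)).re := by
  have him' : -1 ≤ u.im := neg_le_of_abs_le ((Complex.abs_im_le_norm u).trans hu)
  have hre : (u * (u + 2 * Complex.I)).re = u.re * u.re - u.im * u.im - 2 * u.im := by
    simp only [Complex.mul_re, Complex.add_re, Complex.add_im, Complex.mul_im, Complex.I_re,
      Complex.I_im, Complex.re_ofNat, Complex.im_ofNat]
    ring
  rw [hre, Complex.sq_norm, Complex.normSq_apply]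
  nlinarith

theorem norm_sq_sub_one_div_two_mul_le_three {ζ : ℂ} (hζ : ‖ζ‖ ≤ 1) :
    ‖(ζ ^ 2 - 1) / 2 * (ζ + 2 * Complex.I)‖ ≤ 3 := by
  have hsq : ‖ζ ^ 2 - 1‖ ≤ 1 + 1 :=
    (norm_sub_le _ _).trans (by simpa using hζ)
  have hadd : ‖ζ + 2 * Complex.I‖ ≤ 1 + 2 := (norm_add_le _ _).trans (by simpa using hζ)
  calc ‖(ζ ^ 2 - 1) / 2 * (ζ + 2 * Complex.I)‖ = ‖ζ ^ 2 - 1‖ / 2 * ‖ζ + 2 * Complex.I‖ := by simp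
    _ ≤ (1 + 1) / 2 * (1 + 2) := by gcongr
    _ = 3 := by norm_num

variable {P : ℂ[X]} {p : ℂ → Prop} [DecidablePred p] {c l A R : ℝ}

theorem div_le_norm_of_norm_sub_le {u z : ℂ} (hl : 0 < l) (hR : ‖z - c‖ ≤ R) (hu0 : u ≠ 0)
    (hu1 : ‖u‖ ≤ 1) (hz : c + l * joukowski u = z) : l / (2 * R + l) ≤ ‖u‖ := by
  have hR0 : 0 ≤ R := (norm_nonneg _).trans hR
  have hnorm : l * ‖joukowski u‖ ≤ R := by
    rwa [← hz, add_sub_cancel_left, norm_mul, Complex.norm_real, Real.norm_of_nonneg hl.le] at hR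
  rw [div_le_iff₀ (by positivity)]
  calc l = l * 1 := (mul_one l).symm
    _ ≤ l * (‖u‖ * (2 * ‖joukowski u‖ + 1)) := by
        gcongr
        exact one_le_norm_mul_norm_joukowski hu0 hu1
    _ = ‖u‖ * (2 * (l * ‖joukowski u‖) + l) := by ring
    _ ≤ ‖u‖ * (2 * R + l) := by gcongr

theorem sq_div_le_re_mul_add_two_I {u z : ℂ} (hl : 0 < l) (him : 0 ≤ z.im) (hR : ‖z - c‖ ≤ R)
    (hu0 : u ≠ 0) (hu1 : ‖u‖ < 1) (hz : c + l * joukowski u = z) :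
    (l / (2 * R + l)) ^ 2 ≤ (u * (u + 2 * Complex.I)).re := by
  have hJim : 0 ≤ (joukowski u).im := by
    rw [← hz] at him
    simpa [hl] using him
  have hR0 : 0 ≤ R := (norm_nonneg _).trans hR
  calc (l / (2 * R + l)) ^ 2 ≤ ‖u‖ ^ 2 := by
        gcongr
        exact div_le_norm_of_norm_sub_le hl hR hu0 hu1.le hz
    _ ≤ _ := sq_norm_le_re_mul_add_two_I hu1.le (im_nonpos_of_joukowski_im_nonneg hu0 hu1 hJim)

theorem exists_add_mul_joukowski_eq {c l z : ℂ} (hl : l ≠ 0)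
    (hz : ∀ t ∈ Icc (-1 : ℝ) 1, c + l * t ≠ z) :
    ∃ u : ℂ, u ≠ 0 ∧ ‖u‖ < 1 ∧ c + l * joukowski u = z := by
  have hcancel : c + l * ((z - c) / l) = z := by rw [mul_div_cancel₀ _ hl, add_sub_cancel]
  obtain ⟨u, hu0, hu1, hu⟩ := exists_joukowski_eq (w := (z - c) / l) fun t ht h ↦
    hz t ht (by rw [← h, hcancel])
  exact ⟨u, hu0, hu1, by rw [hu, hcancel]⟩

theorem norm_sum_roots_mul_add_two_I_le (hl : 0 < l) {u : ℂ → ℂ}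
    (hu : ∀ z ∈ P.roots, u z ≠ 0 ∧ ‖u z‖ < 1 ∧ c + l * joukowski (u z) = z)
    (hA : ∀ t ∈ Icc (-1 : ℝ) 1,
      ‖P.derivative.eval (c + l * t : ℂ) / P.eval (c + l * t : ℂ)‖ ≤ A) :
    ‖(P.roots.map fun z ↦ u z * (u z + 2 * Complex.I)).sum‖ ≤ 3 * (l * A) := by
  rw [← circleAverage_logDeriv_joukowski (h := fun ζ ↦ ζ + 2 * Complex.I)
    (Differentiable.diffContOnCl (by fun_prop)) (Complex.ofReal_ne_zero.mpr hl.ne') hu]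
  refine norm_circleAverage_le_of_norm_le fun ζ hζ ↦ ?_
  have hζ1 : ‖ζ‖ = 1 := by simpa using hζ
  rw [joukowski_of_norm_eq_one hζ1, norm_mul, norm_mul (l : ℂ), Complex.norm_real,
    Real.norm_of_nonneg hl.le]
  gcongr
  · exact norm_sq_sub_one_div_two_mul_le_three hζ1.le
  · exact hA _ (abs_le.mp (hζ1 ▸ Complex.abs_re_le_norm ζ))

theorem countP_roots_mul_sub_le_of_norm_logDeriv_le (hl : 0 < l)
    (hp : ∀ z, p z → 0 ≤ z.im ∧ ‖z - c‖ ≤ R)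
    (hne : ∀ t ∈ Icc (-1 : ℝ) 1, P.eval (c + l * t : ℂ) ≠ 0)
    (hA : ∀ t ∈ Icc (-1 : ℝ) 1,
      ‖P.derivative.eval (c + l * t : ℂ) / P.eval (c + l * t : ℂ)‖ ≤ A) :
    P.roots.countP p * (l / (2 * R + l)) ^ 2 - 3 * P.roots.countP (fun z ↦ ¬ p z) ≤
      3 * (l * A) := by
  have hpre : ∀ z ∈ P.roots, ∃ u : ℂ, u ≠ 0 ∧ ‖u‖ < 1 ∧ c + l * joukowski u = z := fun z hz ↦
    exists_add_mul_joukowski_eq (Complex.ofReal_ne_zero.mpr hl.ne') fun t ht h ↦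
      hne t ht (h ▸ isRoot_of_mem_roots hz)
  choose! u hu using hpre
  have hlower := countP_mul_add_countP_not_mul_le_sum_map
    (f := fun z ↦ Complex.reCLM (u z * (u z + 2 * Complex.I)))
    (fun z hz hpz ↦ sq_div_le_re_mul_add_two_I hl (hp z hpz).1 (hp z hpz).2 (hu z hz).1
      (hu z hz).2.1 (hu z hz).2.2)
    fun z hz ↦ neg_three_le_re_mul_add_two_I (hu z hz).2.1.le
  have hre : (P.roots.map fun z ↦ Complex.reCLM (u z * (u z + 2 * Complex.I))).sum =
      Complex.reCLM (P.roots.map fun z ↦ u z * (u z + 2 * Complex.I)).sum := by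
    rw [map_multiset_sum, Multiset.map_map, Function.comp_def]
  rw [hre, Complex.reCLM_apply] at hlower
  linarith [(Complex.re_le_norm _).trans (norm_sum_roots_mul_add_two_I_le hl hu hA)]

end RootCount

/-- The sup norm `‖P‖_{[-1,1]}` of a polynomial. -/
noncomputable def intervalSupNorm (P : ℂ[X]) : ℝ := ⨆ x : Icc (-1 : ℝ) 1, ‖P.eval ((x : ℝ) : ℂ)‖

section SupNorm

variable (P : ℂ[X]) {p : ℂ → Prop} [DecidablePred p] {l : ℝ}

theorem exists_isMaxOn_norm_eval :
    ∃ x₀ ∈ Icc (-1 : ℝ) 1, ∀ x ∈ Icc (-1 : ℝ) 1, ‖P.eval (x : ℂ)‖ ≤ ‖P.eval (x₀ : ℂ)‖ :=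
  isCompact_Icc.exists_isMaxOn ⟨0, by norm_num⟩
    (P.continuous.comp Complex.continuous_ofReal).norm.continuousOn

theorem norm_eval_le_intervalSupNorm {x : ℝ} (hx : x ∈ Icc (-1 : ℝ) 1) :
    ‖P.eval (x : ℂ)‖ ≤ intervalSupNorm P := by
  obtain ⟨x₀, -, hmax⟩ := exists_isMaxOn_norm_eval P
  exact le_ciSup (f := fun x : Icc (-1 : ℝ) 1 ↦ ‖P.eval ((x : ℝ) : ℂ)‖)
    ⟨_, forall_mem_range.mpr fun x ↦ hmax x x.2⟩ ⟨x, hx⟩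

theorem intervalSupNorm_nonneg : 0 ≤ intervalSupNorm P := Real.iSup_nonneg fun _ ↦ norm_nonneg _

theorem exists_norm_eval_eq_intervalSupNorm :
    ∃ x ∈ Icc (-1 : ℝ) 1, ‖P.eval (x : ℂ)‖ = intervalSupNorm P := by
  obtain ⟨x₀, hx₀, hmax⟩ := exists_isMaxOn_norm_eval P
  exact ⟨x₀, hx₀, (norm_eval_le_intervalSupNorm P hx₀).antisymm
    (Real.iSup_le (fun x ↦ hmax x x.2) (norm_nonneg _))⟩

theorem norm_eval_sub_eval_le_intervalSupNorm_derivative {x y : ℝ} (hx : x ∈ Icc (-1 : ℝ) 1)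
    (hy : y ∈ Icc (-1 : ℝ) 1) :
    ‖P.eval (y : ℂ) - P.eval (x : ℂ)‖ ≤ intervalSupNorm P.derivative * |y - x| :=
  (convex_Icc (-1 : ℝ) 1).norm_image_sub_le_of_norm_hasDerivWithin_le
    (f := fun z : ℝ ↦ P.eval (z : ℂ))
    (fun z _ ↦ (P.hasDerivAt (z : ℂ)).comp_ofReal.hasDerivWithinAt)
    (fun _ hz ↦ norm_eval_le_intervalSupNorm P.derivative hz) hx hy

theorem exists_abs_add_le_one_abs_sub_le {x : ℝ} (hx : x ∈ Icc (-1 : ℝ) 1) (hl0 : 0 ≤ l)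
    (hl1 : l ≤ 1) : ∃ c : ℝ, |c| + l ≤ 1 ∧ |c - x| ≤ l := by
  have hle : -(1 - l) ≤ 1 - l := by linarith
  refine ⟨max (-(1 - l)) (min (1 - l) x), ?_, ?_⟩
  · have : |max (-(1 - l)) (min (1 - l) x)| ≤ 1 - l :=
      abs_le.mpr ⟨le_max_left _ _, max_le hle (min_le_left _ _)⟩
    linarith
  · obtain ⟨hx1, hx2⟩ := hx
    rw [abs_sub_le_iff]
    grind

theorem half_intervalSupNorm_lt_norm_eval {x₀ x : ℝ} (hx₀ : x₀ ∈ Icc (-1 : ℝ) 1)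
    (hx : x ∈ Icc (-1 : ℝ) 1) (hmax : ‖P.eval (x₀ : ℂ)‖ = intervalSupNorm P) (hl : |x - x₀| ≤ 2 * l)
    (hsmall : 4 * l * intervalSupNorm P.derivative < intervalSupNorm P) :
    intervalSupNorm P / 2 < ‖P.eval (x : ℂ)‖ := by
  have hlip : ‖P.eval (x : ℂ) - P.eval (x₀ : ℂ)‖ ≤ intervalSupNorm P.derivative * (2 * l) :=
    (norm_eval_sub_eval_le_intervalSupNorm_derivative P hx₀ hx).trans
      (mul_le_mul_of_nonneg_left hl (intervalSupNorm_nonneg _))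
  have htri := norm_sub_norm_le (P.eval (x₀ : ℂ)) (P.eval (x : ℂ))
  rw [norm_sub_rev, hmax] at htri
  linarith

theorem exists_segment_half_intervalSupNorm_lt (hl0 : 0 ≤ l) (hl1 : l ≤ 1)
    (hsmall : 4 * l * intervalSupNorm P.derivative < intervalSupNorm P) :
    ∃ c : ℝ, |c| + l ≤ 1 ∧ ∀ t ∈ Icc (-1 : ℝ) 1,
      c + l * t ∈ Icc (-1 : ℝ) 1 ∧ intervalSupNorm P / 2 < ‖P.eval (c + l * t : ℂ)‖ := by
  obtain ⟨x₀, hx₀, hmax⟩ := exists_norm_eval_eq_intervalSupNorm P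
  obtain ⟨c, hcl, hcx⟩ := exists_abs_add_le_one_abs_sub_le hx₀ hl0 hl1
  refine ⟨c, hcl, fun t ht ↦ ?_⟩
  have hlt : |l * t| ≤ l := by
    rw [abs_mul, abs_of_nonneg hl0]
    exact mul_le_of_le_one_right hl0 (abs_le.mpr ht)
  have hmem : c + l * t ∈ Icc (-1 : ℝ) 1 := abs_le.mp ((abs_add_le _ _).trans (by linarith))
  have hdist : |c + l * t - x₀| ≤ 2 * l := by
    rw [add_sub_right_comm]
    exact (abs_add_le _ _).trans (by linarith)
  exact ⟨hmem, by simpa using half_intervalSupNorm_lt_norm_eval P hx₀ hmem hmax hdist hsmall⟩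

theorem intervalSupNorm_le_of_countP_roots (hp : ∀ z, p z → ‖z‖ ≤ 1 ∧ 0 ≤ z.im) (hl0 : 0 < l)
    (hl1 : l ≤ 1)
    (hcount : 3 / 2 ≤ P.roots.countP p * (l / 4) ^ 2 - 3 * P.roots.countP (fun z ↦ ¬ p z)) :
    intervalSupNorm P ≤ 4 * l * intervalSupNorm P.derivative := by
  by_contra! hsmall
  obtain ⟨c, hcl, hseg⟩ := exists_segment_half_intervalSupNorm_lt P hl0.le hl1 hsmall
  set D := intervalSupNorm P.derivative
  set M := intervalSupNorm P
  have hM : 0 < M := hsmall.trans_le' (mul_nonneg (by positivity) (intervalSupNorm_nonneg _))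
  have hlog : ∀ t ∈ Icc (-1 : ℝ) 1,
      ‖P.derivative.eval (c + l * t : ℂ) / P.eval (c + l * t : ℂ)‖ ≤ D / (M / 2) := by
    intro t ht
    obtain ⟨hmem, hhalf⟩ := hseg t ht
    have hD : ‖P.derivative.eval (c + l * t : ℂ)‖ ≤ D := by
      simpa using norm_eval_le_intervalSupNorm P.derivative hmem
    rw [norm_div]
    exact div_le_div₀ (intervalSupNorm_nonneg _) hD (half_pos hM) hhalf.le
  have hdist : ∀ z, p z → ‖z - c‖ ≤ 2 - l / 2 := fun z hz ↦ by
    have := norm_sub_le z (c : ℂ)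
    rw [Complex.norm_real, Real.norm_eq_abs] at this
    linarith [(hp z hz).1]
  have hbound := countP_roots_mul_sub_le_of_norm_logDeriv_le hl0
    (fun z hz ↦ ⟨(hp z hz).2, hdist z hz⟩)
    (fun t ht ↦ norm_pos_iff.mp ((half_pos hM).trans (hseg t ht).2)) hlog
  rw [show 2 * (2 - l / 2) + l = 4 by ring] at hbound
  have hlt : l * (D / (M / 2)) < 1 / 2 := by
    rw [mul_div_assoc', div_lt_iff₀ (half_pos hM)]
    linarith
  linarith

end SupNorm

theorem lower_bound_small_k_general (n k : ℕ) (hk : 1 ≤ k) (hkn : 82 * k ≤ n) (P : ℂ[X])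
    (hdeg : P.natDegree ≤ n)
    (hroots : n - k ≤ P.roots.countP (fun z => ‖z‖ ≤ 1 ∧ 0 ≤ z.im)) :
    1 / 36 * √(((n : ℝ) - k) / k) * intervalSupNorm P ≤ intervalSupNorm P.derivative := by
  have hkR : (1 : ℝ) ≤ k := by exact_mod_cast hk
  have hmR : 81 * (k : ℝ) ≤ n - k := by
    have : (82 : ℝ) * k ≤ n := by exact_mod_cast hkn
    linarith
  have hm : 0 < (n : ℝ) - k := by linarith
  have hgood : (n : ℝ) - k ≤ P.roots.countP (fun z => ‖z‖ ≤ 1 ∧ 0 ≤ z.im) := by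
    rw [sub_le_iff_le_add]
    exact_mod_cast Nat.sub_le_iff_le_add.mp hroots
  have hbad : (P.roots.countP (fun z => ¬ (‖z‖ ≤ 1 ∧ 0 ≤ z.im)) : ℝ) ≤ k := by
    have := P.roots.card_eq_countP_add_countP (fun z => ‖z‖ ≤ 1 ∧ 0 ≤ z.im)
    have := P.card_roots'
    exact_mod_cast (by omega : P.roots.countP (fun z => ¬ (‖z‖ ≤ 1 ∧ 0 ≤ z.im)) ≤ k)
  set r := √(((n : ℝ) - k) / k)
  have hr2 : r ^ 2 = (n - k) / k := Real.sq_sqrt (by positivity)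
  have hr9 : 9 ≤ r := Real.le_sqrt_of_sq_le (by rw [le_div_iff₀ (by positivity)]; linarith)
  have hM := intervalSupNorm_le_of_countP_roots P (p := fun z ↦ ‖z‖ ≤ 1 ∧ 0 ≤ z.im) (l := 9 / r)
    (fun _ hz ↦ hz) (by positivity) (by rw [div_le_one₀] <;> linarith) (by
      have hcount : ((n : ℝ) - k) * (9 / r / 4) ^ 2 = 81 / 16 * k := by
        rw [div_pow, div_pow, hr2]
        field_simp
        norm_num
      have := mul_le_mul_of_nonneg_right hgood (sq_nonneg (9 / r / 4))
      linarith)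
  calc 1 / 36 * r * intervalSupNorm P
      ≤ 1 / 36 * r * (4 * (9 / r) * intervalSupNorm P.derivative) := by gcongr
    _ = intervalSupNorm P.derivative := by field_simp; norm_num

theorem lower_bound_small_k (n k : ℕ) (hk : 1 ≤ k) (hkn : 163000 * k ≤ n)
    (P : Polynomial ℂ) (hdeg : P.natDegree ≤ n)
    (hroots : n - k ≤ P.roots.countP (fun z => ‖z‖ ≤ 1 ∧ 0 ≤ z.im)) :
    (1/202 : ℝ) * Real.sqrt (((n : ℝ) - (k : ℝ)) / (8 * (k : ℝ))) *
        (⨆ x : Icc (-1:ℝ) 1, ‖P.eval ((x : ℝ) : ℂ)‖) ≤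
      ⨆ x : Icc (-1:ℝ) 1, ‖(Polynomial.derivative P).eval ((x : ℝ) : ℂ)‖ := by
  have hn : (0 : ℝ) ≤ n - k := sub_nonneg.mpr (by exact_mod_cast (by omega : k ≤ n))
  refine le_trans (mul_le_mul_of_nonneg_right ?_ (intervalSupNorm_nonneg P))
    (lower_bound_small_k_general n k hk (by omega) P hdeg hroots)
  gcongr <;> linarith
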